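/- Let Ω ⊆ ℝ³ be open with topological boundary ∂Ω, let ρ₀, c₀, φ₀ : ℝ³ → ℝ with ρ₀ differentiable and strictly positive on Ω ∪ ∂Ω, c₀ ≠ 0 on Ω ∪ ∂Ω, φ₀ differentiable, and let ω > 0, γ ≥ 0 be real and f : ℝ³ → ℂ. Let ξ : ℝ³ → ℂ³ and δp : ℝ³ → ℂ be differentiable on Ω, and set u_L := √ρ₀ ξ and w_L := δp/√ρ₀. Then the following are equivalent: (a) at every x ∈ Ω, ρ₀ [ (−ω² − 2iωγ) ξ + ((α_ρ − ∇φ₀/c₀²)·ξ) ∇φ₀ ] + (δp/c₀²) ∇φ₀ + ∇δp = 0 and δp/(ρ₀ c₀²) − (ξ·∇φ₀)/c₀² + div ξ = f, and at every x ∈ ∂Ω, δp − ρ₀ (ξ·∇φ₀) = 0; (b) at every x ∈ Ω, (−ω² − 2iωγ) u_L + ((α_ρ − ∇φ₀/c₀²)·u_L) ∇φ₀ + (∇φ₀/c₀² − α_ρ/2) w_L + ∇w_L = 0 and w_L/c₀² + u_L·(−∇φ₀/c₀² + α_ρ/2) + div u_L = √ρ₀ f, and at every x ∈ ∂Ω,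 w_L − u_L·∇φ₀ = 0. Here α_ρ = −∇ρ₀/ρ₀. -/

import Mathlib

/-- Gradient of a complex-valued function on ℝ³: vector of partial derivatives. -/
noncomputable def grad (g : (Fin 3 → ℝ) → ℂ) (x : Fin 3 → ℝ) : Fin 3 → ℂ :=
  fun i => fderiv ℝ g x (Pi.single i 1)

/-- Gradient of a real-valued function on ℝ³: vector of partial derivatives. -/
noncomputable def gradR (g : (Fin 3 → ℝ) → ℝ) (x : Fin 3 → ℝ) : Fin 3 → ℝ :=
  fun i => fderiv ℝ g x (Pi.single i 1)

/-- Divergence of a ℂ³-valued field on ℝ³: sum of the partial derivatives of its components. -/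
noncomputable def divC (u : (Fin 3 → ℝ) → Fin 3 → ℂ) (x : Fin 3 → ℝ) : ℂ :=
  ∑ i, fderiv ℝ (fun y => u y i) x (Pi.single i 1)

/-- Inverse density scale-height vector `α_ρ = -∇ρ/ρ`. -/
noncomputable def alphaRho (ρ : (Fin 3 → ℝ) → ℝ) (x : Fin 3 → ℝ) : Fin 3 → ℝ :=
  fun i => -(gradR ρ x i) / ρ x

/-!
All derivatives of the Liouville unknowns come from the weighted product rule
`∂ᵥ(ρᵃ h) = ρᵃ (∂ᵥh + a (∂ᵥρ / ρ) h)`, used with `a = 1/2` for `u_L = √ρ ξ` and `a = -1/2` for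
`w_L = δp / √ρ`. In terms of `α_ρ = -∇ρ/ρ` this says `div u_L = √ρ (div ξ - α_ρ·ξ/2)` and
`∇w_L = (∇δp + α_ρ δp/2) / √ρ`, so each equation of one system is `√ρ ≠ 0` times the matching
equation of the other.
-/

theorem ofReal_sqrt_ne_zero {r : ℝ} (hr : 0 < r) : (√r : ℂ) ≠ 0 :=
  Complex.ofReal_ne_zero.mpr (Real.sqrt_pos.mpr hr).ne'

theorem ofReal_sqrt_mul_self {r : ℝ} (hr : 0 ≤ r) : (√r : ℂ) * √r = r := by
  rw [← Complex.ofReal_mul, Real.mul_self_sqrt hr]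

section LiouvilleUnknowns

variable {X ι : Type*}

/-- The Liouville pressure `w_L = δp / √ρ`. -/
noncomputable def liouvillePressure (ρ : X → ℝ) (p : X → ℂ) : X → ℂ :=
  fun y => p y / (√(ρ y) : ℂ)

/-- The Liouville displacement `u_L = √ρ ξ`. -/
noncomputable def liouvilleDisplacement (ρ : X → ℝ) (ξ : X → ι → ℂ) : X → ι → ℂ :=
  fun y i => (√(ρ y) : ℂ) * ξ y i

variable [Fintype ι] {ρ : X → ℝ} {x : X}

/-- The Lagrangian pressure perturbation `δp - ρ ξ·g`, which vanishes on a vacuum boundary; `g`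
stands for `∇φ₀`. -/
noncomputable def lagrangianPressure (ρ : X → ℝ) (g ξ : X → ι → ℂ) (p : X → ℂ) (x : X) : ℂ :=
  p x - ρ x * ∑ j, g x j * ξ x j

theorem sum_mul_liouvilleDisplacement (b : ι → ℂ) (ξ : X → ι → ℂ) :
    ∑ j, b j * liouvilleDisplacement ρ ξ x j = √(ρ x) * ∑ j, b j * ξ x j := by
  simp only [liouvilleDisplacement, Finset.mul_sum, mul_left_comm]

theorem lagrangianPressure_eq_sqrt_mul (hpos : 0 < ρ x) (g ξ : X → ι → ℂ) (p : X → ℂ) :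
    lagrangianPressure ρ g ξ p x = √(ρ x) *
      (liouvillePressure ρ p x - ∑ j, g x j * liouvilleDisplacement ρ ξ x j) := by
  have hs := ofReal_sqrt_ne_zero hpos
  rw [lagrangianPressure, sum_mul_liouvilleDisplacement, liouvillePressure,
    ← ofReal_sqrt_mul_self hpos.le]
  field_simp

end LiouvilleUnknowns

section WeightedProductRule

variable {E : Type*} [NormedAddCommGroup E] [NormedSpace ℝ E] {ρ : E → ℝ} {x : E}

theorem fderiv_rpow_smul {F : Type*} [NormedAddCommGroup F] [NormedSpace ℝ F] {h : E → F}
    (hρ : DifferentiableAt ℝ ρ x) (hpos : 0 < ρ x) (hh : DifferentiableAt ℝ h x) (a : ℝ) (v : E) :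
    fderiv ℝ (fun y => ρ y ^ a • h y) x v =
      ρ x ^ a • (fderiv ℝ h x v + (a * (fderiv ℝ ρ x v / ρ x)) • h x) := by
  have hpow : HasFDerivAt (fun y => ρ y ^ a) ((a * ρ x ^ (a - 1)) • fderiv ℝ ρ x) x :=
    hρ.hasFDerivAt.rpow_const (Or.inl hpos.ne')
  have hcoeff : a * ρ x ^ (a - 1) * fderiv ℝ ρ x v =
      ρ x ^ a * (a * (fderiv ℝ ρ x v / ρ x)) := by
    rw [Real.rpow_sub_one hpos.ne']
    ring
  rw [(hpow.fun_smul hh.hasFDerivAt).fderiv]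
  simp only [add_apply, smul_apply, ContinuousLinearMap.smulRight_apply, smul_eq_mul,
    smul_add, smul_smul, hcoeff]

theorem fderiv_sqrt_mul {h : E → ℂ} (hρ : DifferentiableAt ℝ ρ x) (hpos : 0 < ρ x)
    (hh : DifferentiableAt ℝ h x) (v : E) :
    fderiv ℝ (fun y => (√(ρ y) : ℂ) * h y) x v =
      √(ρ x) * (fderiv ℝ h x v + (fderiv ℝ ρ x v / ρ x : ℝ) / 2 * h x) := by
  have hsmul := fderiv_rpow_smul hρ hpos hh (1 / 2) v
  simp only [← Real.sqrt_eq_rpow, Complex.real_smul] at hsmul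
  rw [hsmul]
  push_cast
  ring

theorem fderiv_liouvillePressure {p : E → ℂ} (hρ : DifferentiableAt ℝ ρ x) (hpos : 0 < ρ x)
    (hp : DifferentiableAt ℝ p x) (v : E) :
    fderiv ℝ (liouvillePressure ρ p) x v =
      (fderiv ℝ p x v - (fderiv ℝ ρ x v / ρ x : ℝ) / 2 * p x) / √(ρ x) := by
  have hrpow {r : ℝ} (hr : 0 < r) : r ^ (-(1 / 2) : ℝ) = (√r)⁻¹ := by
    rw [Real.rpow_neg hr.le, Real.sqrt_eq_rpow]
  have heq : liouvillePressure ρ p =ᶠ[nhds x] fun y => ρ y ^ (-(1 / 2) : ℝ) • p y := by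
    filter_upwards [hρ.continuousAt.eventually (lt_mem_nhds hpos)] with y hy
    rw [liouvillePressure, hrpow hy, Complex.real_smul, Complex.ofReal_inv, div_eq_inv_mul]
  rw [heq.fderiv_eq, fderiv_rpow_smul hρ hpos hp, hrpow hpos, Complex.real_smul,
    Complex.real_smul]
  push_cast
  ring

end WeightedProductRule

section LiouvilleSystem

variable {ι : Type*} [Fintype ι] [DecidableEq ι] {ρ : (ι → ℝ) → ℝ} {x : ι → ℝ}

/-- The partial derivative `∂ᵢ h` on `ℝ^ι`, shared by real densities and complex fields; it has the
value `0` where `h` is not differentiable. -/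
noncomputable def partialDeriv {F : Type*} [NormedAddCommGroup F] [NormedSpace ℝ F]
    (h : (ι → ℝ) → F) (x : ι → ℝ) (i : ι) : F :=
  fderiv ℝ h x (Pi.single i 1)

/-- The inverse density scale-height vector `α_ρ` in any dimension. -/
noncomputable def invScaleHeight (ρ : (ι → ℝ) → ℝ) (x : ι → ℝ) (i : ι) : ℝ :=
  -(partialDeriv ρ x i) / ρ x

/-- The left-hand side of the momentum equation for `(ξ, δp)`. The coefficients are arbitrary:
`σ` stands for `-ω² - 2iωγ`, `κ` for `c₀⁻²` and `g` for `∇φ₀`, here and in the operators below. -/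
noncomputable def momentumOp (σ : (ι → ℝ) → ℂ) (ρ : (ι → ℝ) → ℝ) (κ : (ι → ℝ) → ℂ)
    (g ξ : (ι → ℝ) → ι → ℂ) (p : (ι → ℝ) → ℂ) (x : ι → ℝ) (i : ι) : ℂ :=
  (ρ x : ℂ) * (σ x * ξ x i + (∑ j, (invScaleHeight ρ x j - g x j * κ x) * ξ x j) * g x i)
    + p x * κ x * g x i + partialDeriv p x i

/-- The left-hand side of the continuity equation for `(ξ, δp)`. -/
noncomputable def continuityOp (ρ : (ι → ℝ) → ℝ) (κ : (ι → ℝ) → ℂ)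
    (g ξ : (ι → ℝ) → ι → ℂ) (p : (ι → ℝ) → ℂ) (x : ι → ℝ) : ℂ :=
  p x / ρ x * κ x - (∑ j, g x j * ξ x j) * κ x
    + ∑ j, partialDeriv (fun y => ξ y j) x j

/-- The left-hand side of the momentum equation for the Liouville unknowns `(u, w)`. -/
noncomputable def liouvilleMomentumOp (σ : (ι → ℝ) → ℂ) (ρ : (ι → ℝ) → ℝ) (κ : (ι → ℝ) → ℂ)
    (g u : (ι → ℝ) → ι → ℂ) (w : (ι → ℝ) → ℂ) (x : ι → ℝ) (i : ι) : ℂ :=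
  σ x * u x i + (∑ j, (invScaleHeight ρ x j - g x j * κ x) * u x j) * g x i
    + (g x i * κ x - invScaleHeight ρ x i / 2) * w x + partialDeriv w x i

/-- The left-hand side of the continuity equation for the Liouville unknowns `(u, w)`. -/
noncomputable def liouvilleContinuityOp (ρ : (ι → ℝ) → ℝ) (κ : (ι → ℝ) → ℂ)
    (g u : (ι → ℝ) → ι → ℂ) (w : (ι → ℝ) → ℂ) (x : ι → ℝ) : ℂ :=
  w x * κ x + (∑ j, (-g x j * κ x + invScaleHeight ρ x j / 2) * u x j)
    + ∑ j, partialDeriv (fun y => u y j) x j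

theorem sum_partialDeriv_liouvilleDisplacement {ξ : (ι → ℝ) → ι → ℂ}
    (hρ : DifferentiableAt ℝ ρ x) (hpos : 0 < ρ x) (hξ : DifferentiableAt ℝ ξ x) :
    ∑ j, partialDeriv (fun y => liouvilleDisplacement ρ ξ y j) x j =
      √(ρ x) * (∑ j, partialDeriv (fun y => ξ y j) x j
        - ∑ j, invScaleHeight ρ x j / 2 * ξ x j) := by
  simp only [liouvilleDisplacement, partialDeriv, invScaleHeight, Finset.mul_sum,
    ← Finset.sum_sub_distrib, fderiv_sqrt_mul hρ hpos (differentiableAt_pi.mp hξ _)]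
  refine Finset.sum_congr rfl fun j _ => ?_
  push_cast
  ring

theorem momentumOp_eq_sqrt_mul {p : (ι → ℝ) → ℂ} (hρ : DifferentiableAt ℝ ρ x) (hpos : 0 < ρ x)
    (hp : DifferentiableAt ℝ p x) (σ κ : (ι → ℝ) → ℂ) (g ξ : (ι → ℝ) → ι → ℂ) (i : ι) :
    momentumOp σ ρ κ g ξ p x i = √(ρ x) *
      liouvilleMomentumOp σ ρ κ g (liouvilleDisplacement ρ ξ) (liouvillePressure ρ p) x i := by
  have hs := ofReal_sqrt_ne_zero hpos
  have hgrad : partialDeriv (liouvillePressure ρ p) x i =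
      (partialDeriv p x i + invScaleHeight ρ x i / 2 * p x) / √(ρ x) := by
    simp only [partialDeriv, invScaleHeight, fderiv_liouvillePressure hρ hpos hp]
    push_cast
    ring
  rw [momentumOp, liouvilleMomentumOp, sum_mul_liouvilleDisplacement, hgrad,
    liouvilleDisplacement, liouvillePressure, ← ofReal_sqrt_mul_self hpos.le]
  -- `ring` would otherwise normalize the summands differently on the two sides.
  generalize ∑ j, (invScaleHeight ρ x j - g x j * κ x) * ξ x j = S
  field_simp
  ring

theorem liouvilleContinuityOp_eq_sqrt_mul {ξ : (ι → ℝ) → ι → ℂ} (hρ : DifferentiableAt ℝ ρ x)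
    (hpos : 0 < ρ x) (hξ : DifferentiableAt ℝ ξ x) (κ : (ι → ℝ) → ℂ) (g : (ι → ℝ) → ι → ℂ)
    (p : (ι → ℝ) → ℂ) :
    liouvilleContinuityOp ρ κ g (liouvilleDisplacement ρ ξ) (liouvillePressure ρ p) x =
      √(ρ x) * continuityOp ρ κ g ξ p x := by
  have hs := ofReal_sqrt_ne_zero hpos
  have hsum : ∑ j, (-g x j * κ x + invScaleHeight ρ x j / 2) * ξ x j =
      -((∑ j, g x j * ξ x j) * κ x) + ∑ j, invScaleHeight ρ x j / 2 * ξ x j := by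
    simp only [Finset.sum_mul, ← Finset.sum_neg_distrib, ← Finset.sum_add_distrib]
    exact Finset.sum_congr rfl fun j _ => by ring
  rw [liouvilleContinuityOp, continuityOp, sum_mul_liouvilleDisplacement, hsum,
    sum_partialDeriv_liouvilleDisplacement hρ hpos hξ, liouvillePressure,
    ← ofReal_sqrt_mul_self hpos.le]
  field_simp
  ring

theorem stmt5_general {Ω Γ : Set (ι → ℝ)} (hρ : ∀ x ∈ Ω, DifferentiableAt ℝ ρ x)
    (hpos : ∀ x ∈ Ω ∪ Γ, 0 < ρ x) (σ κ : (ι → ℝ) → ℂ) (g : (ι → ℝ) → ι → ℂ) (f : (ι → ℝ) → ℂ)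
    {ξ : (ι → ℝ) → ι → ℂ} {p : (ι → ℝ) → ℂ} (hξ : ∀ x ∈ Ω, DifferentiableAt ℝ ξ x)
    (hp : ∀ x ∈ Ω, DifferentiableAt ℝ p x) {u : (ι → ℝ) → ι → ℂ} {w : (ι → ℝ) → ℂ}
    (hu : u = liouvilleDisplacement ρ ξ) (hw : w = liouvillePressure ρ p) :
    ((∀ x ∈ Ω, (∀ i, momentumOp σ ρ κ g ξ p x i = 0) ∧ continuityOp ρ κ g ξ p x = f x) ∧
        ∀ x ∈ Γ, lagrangianPressure ρ g ξ p x = 0) ↔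
      ((∀ x ∈ Ω, (∀ i, liouvilleMomentumOp σ ρ κ g u w x i = 0) ∧
          liouvilleContinuityOp ρ κ g u w x = √(ρ x) * f x) ∧
        ∀ x ∈ Γ, w x - ∑ j, g x j * u x j = 0) := by
  subst hu hw
  have hs : ∀ x ∈ Ω ∪ Γ, (√(ρ x) : ℂ) ≠ 0 := fun x hx => ofReal_sqrt_ne_zero (hpos x hx)
  refine and_congr (forall₂_congr fun x hx => and_congr (forall_congr' fun i => ?momentum)
    ?continuity) (forall₂_congr fun x hx => ?boundary)
  case momentum =>
    rw [momentumOp_eq_sqrt_mul (hρ x hx) (hpos x (.inl hx)) (hp x hx),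
      mul_eq_zero_iff_left (hs x (.inl hx))]
  case continuity =>
    rw [liouvilleContinuityOp_eq_sqrt_mul (hρ x hx) (hpos x (.inl hx)) (hξ x hx),
      mul_right_inj' (hs x (.inl hx))]
  case boundary =>
    rw [lagrangianPressure_eq_sqrt_mul (hpos x (.inr hx)), mul_eq_zero_iff_left (hs x (.inr hx))]

end LiouvilleSystem

theorem stmt5 (Ω : Set (Fin 3 → ℝ)) (hΩ : IsOpen Ω)
    (ρ₀ c₀ φ₀ : (Fin 3 → ℝ) → ℝ)
    (hρdiff : ∀ x ∈ Ω ∪ frontier Ω, DifferentiableAt ℝ ρ₀ x)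
    (hρpos : ∀ x ∈ Ω ∪ frontier Ω, 0 < ρ₀ x)
    (hc : ∀ x ∈ Ω ∪ frontier Ω, c₀ x ≠ 0)
    (hφ : Differentiable ℝ φ₀)
    (ω γ : ℝ) (hω : 0 < ω) (hγ : 0 ≤ γ)
    (f : (Fin 3 → ℝ) → ℂ)
    (ξ : (Fin 3 → ℝ) → Fin 3 → ℂ) (δp : (Fin 3 → ℝ) → ℂ)
    (hξ : ∀ x ∈ Ω, DifferentiableAt ℝ ξ x)
    (hδp : ∀ x ∈ Ω, DifferentiableAt ℝ δp x)
    (uL : (Fin 3 → ℝ) → Fin 3 → ℂ) (wL : (Fin 3 → ℝ) → ℂ)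
    (huL : uL = fun y => fun i => (Real.sqrt (ρ₀ y) : ℂ) * ξ y i)
    (hwL : wL = fun y => δp y / (Real.sqrt (ρ₀ y) : ℂ)) :
    -- (a) original system with vacuum boundary condition
    ( (∀ x ∈ Ω,
        (∀ i, (ρ₀ x : ℂ) *
            ( (-(ω : ℂ) ^ 2 - 2 * Complex.I * ω * γ) * ξ x i
              + (∑ j, ((alphaRho ρ₀ x j - gradR φ₀ x j / (c₀ x) ^ 2 : ℝ) : ℂ) * ξ x j)
                  * (gradR φ₀ x i : ℂ) )
          + (δp x / ((c₀ x) ^ 2 : ℂ)) * (gradR φ₀ x i : ℂ)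
          + grad δp x i = 0)
        ∧ δp x / ((ρ₀ x : ℂ) * ((c₀ x) ^ 2 : ℂ))
            - (∑ j, (gradR φ₀ x j : ℂ) * ξ x j) / ((c₀ x) ^ 2 : ℂ)
            + divC ξ x = f x)
      ∧ (∀ x ∈ frontier Ω,
          δp x - (ρ₀ x : ℂ) * ∑ j, (gradR φ₀ x j : ℂ) * ξ x j = 0) )
    ↔
    -- (b) Liouville system with its boundary condition
    ( (∀ x ∈ Ω,
        (∀ i, (-(ω : ℂ) ^ 2 - 2 * Complex.I * ω * γ) * uL x i
          + (∑ j, ((alphaRho ρ₀ x j - gradR φ₀ x j / (c₀ x) ^ 2 : ℝ) : ℂ) * uL x j)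
              * (gradR φ₀ x i : ℂ)
          + ((gradR φ₀ x i / (c₀ x) ^ 2 - alphaRho ρ₀ x i / 2 : ℝ) : ℂ) * wL x
          + grad wL x i = 0)
        ∧ wL x / ((c₀ x) ^ 2 : ℂ)
            + (∑ j, ((-(gradR φ₀ x j) / (c₀ x) ^ 2 + alphaRho ρ₀ x j / 2 : ℝ) : ℂ) * uL x j)
            + divC uL x = (Real.sqrt (ρ₀ x) : ℂ) * f x)
      ∧ (∀ x ∈ frontier Ω,
          wL x - ∑ j, (gradR φ₀ x j : ℂ) * uL x j = 0) ) := by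
  simpa only [momentumOp, continuityOp, lagrangianPressure, liouvilleMomentumOp,
    liouvilleContinuityOp, invScaleHeight, partialDeriv, alphaRho, grad, gradR, divC,
    div_eq_mul_inv, mul_inv, mul_assoc, Complex.ofReal_add, Complex.ofReal_sub, Complex.ofReal_neg,
    Complex.ofReal_mul, Complex.ofReal_inv, Complex.ofReal_pow, Complex.ofReal_ofNat] using
    stmt5_general (fun x hx => hρdiff x (.inl hx)) hρpos
      (fun _ => -(ω : ℂ) ^ 2 - 2 * Complex.I * ω * γ) (fun x => ((c₀ x : ℂ) ^ 2)⁻¹)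
      (fun x i => (gradR φ₀ x i : ℂ)) f hξ hδp huL hwL
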